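/- arXiv:1806.06001 — 2 statements merged into one kernel-verified Lean document; each statement's English description precedes it below -/
import Mathlib

section
/- Let X be a completely regular Hausdorff (T3.5) space. Player II has a winning strategy in the Rothberger game G1(O_X,O_X) on X if and only if player I has a winning strategy in the discrete selection game CD(Cp(X)). -/
open Set Filter Topology

/-- The list `[a 0, …, a (n-1)]` of the first `n` moves of a play `a`. -/
def hist {α : Type*} (a : ℕ → α) (n : ℕ) : List α :=
  List.ofFn fun i : Fin n => a i

section SelectionGames

variable {M : Type*}

/-- The selection principle `S1(A,B)`. -/
def S1 (A B : Set (Set M)) : Prop :=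
  ∀ a : ℕ → Set M, (∀ n, a n ∈ A) →
    ∃ b : ℕ → M, (∀ n, b n ∈ a n) ∧ Set.range b ∈ B

/-- The selection principle `Sfin(A,B)`. -/
def Sfin (A B : Set (Set M)) : Prop :=
  ∀ a : ℕ → Set M, (∀ n, a n ∈ A) →
    ∃ b : ℕ → Set M, (∀ n, b n ⊆ a n ∧ (b n).Finite) ∧ (⋃ n, b n) ∈ B

/-- Player I has a winning predetermined strategy in the selection game `G1(A,B)`:
a sequence of moves `σ n ∈ A`, depending only on the round number, such that
no legal sequence of responses by II produces a member of `B`. -/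
def IPredetWinsG1 (A B : Set (Set M)) : Prop :=
  ∃ σ : ℕ → Set M, (∀ n, σ n ∈ A) ∧
    ∀ b : ℕ → M, (∀ n, b n ∈ σ n) → Set.range b ∉ B

/-- Player I has a winning predetermined strategy in the selection game `Gfin(A,B)`. -/
def IPredetWinsGfin (A B : Set (Set M)) : Prop :=
  ∃ σ : ℕ → Set M, (∀ n, σ n ∈ A) ∧
    ∀ b : ℕ → Set M, (∀ n, b n ⊆ σ n ∧ (b n).Finite) → (⋃ n, b n) ∉ B

/-- Player I has a winning (perfect-information) strategy in `G1(A,B)`: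
I's move in round `n` depends on II's previous moves `b 0, …, b (n-1)`. -/
def IWinsG1 (A B : Set (Set M)) : Prop :=
  ∃ σ : List M → Set M, (∀ h, σ h ∈ A) ∧
    ∀ b : ℕ → M, (∀ n, b n ∈ σ (hist b n)) → Set.range b ∉ B

/-- Player II has a winning (perfect-information) strategy in `G1(A,B)`:
II's move in round `n` depends on I's previous moves `a 0, …, a (n-1)`
together with I's current move `a n`; it is legal and always produces a member of `B`. -/
def IIWinsG1 (A B : Set (Set M)) : Prop :=
  ∃ σ : List (Set M) → Set M → M,
    ∀ a : ℕ → Set M, (∀ n, a n ∈ A) →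
      (∀ n, σ (hist a n) (a n) ∈ a n) ∧
      Set.range (fun n => σ (hist a n) (a n)) ∈ B

/-- Player II has a winning Markov strategy in `G1(A,B)`: II's move depends only on
I's current move and the round number. -/
def IIMarkovWinsG1 (A B : Set (Set M)) : Prop :=
  ∃ σ : Set M → ℕ → M,
    ∀ a : ℕ → Set M, (∀ n, a n ∈ A) →
      (∀ n, σ (a n) n ∈ a n) ∧
      Set.range (fun n => σ (a n) n) ∈ B

end SelectionGames

section TopologicalGames

variable {X : Type*}

/-- `𝒰` is an open cover of the space `X`. -/
def IsOpenCover [TopologicalSpace X] (𝒰 : Set (Set X)) : Prop :=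
  (∀ U ∈ 𝒰, IsOpen U) ∧ ⋃₀ 𝒰 = Set.univ

/-- `𝒰` is an ω-cover of `X`: an open cover such that every finite subset of `X`
is contained in a single member of `𝒰`. -/
def IsOmegaCover [TopologicalSpace X] (𝒰 : Set (Set X)) : Prop :=
  IsOpenCover 𝒰 ∧ ∀ F : Finset X, ∃ U ∈ 𝒰, ↑F ⊆ U

/-- `D` is a closed discrete subset of the space. -/
def IsClosedDiscrete [TopologicalSpace X] (D : Set X) : Prop :=
  IsClosed D ∧ ∀ x ∈ D, ∃ U : Set X, IsOpen U ∧ U ∩ D = {x}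

/-- Player I has a winning predetermined strategy in the point-open game `PO(X)`. -/
def IPredetWinsPO (X : Type*) [TopologicalSpace X] : Prop :=
  ∃ p : ℕ → X, ∀ U : ℕ → Set X,
    (∀ n, IsOpen (U n) ∧ p n ∈ U n) → (⋃ n, U n) = Set.univ

/-- Player II has a winning Markov strategy in the point-open game `PO(X)`. -/
def IIMarkovWinsPO (X : Type*) [TopologicalSpace X] : Prop :=
  ∃ σ : X → ℕ → Set X,
    (∀ x n, IsOpen (σ x n) ∧ x ∈ σ x n) ∧
    ∀ p : ℕ → X, (⋃ n, σ (p n) n) ≠ Set.univ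

/-- Player I has a winning predetermined strategy in the finite-open game `FO(X)`. -/
def IPredetWinsFO (X : Type*) [TopologicalSpace X] : Prop :=
  ∃ p : ℕ → Finset X, ∀ U : ℕ → Set X,
    (∀ n, IsOpen (U n) ∧ ↑(p n) ⊆ U n) → (⋃ n, U n) = Set.univ

/-- Player II has a winning Markov strategy in the finite-open game `FO(X)`. -/
def IIMarkovWinsFO (X : Type*) [TopologicalSpace X] : Prop :=
  ∃ σ : Finset X → ℕ → Set X,
    (∀ F n, IsOpen (σ F n) ∧ ↑F ⊆ σ F n) ∧
    ∀ F : ℕ → Finset X, (⋃ n, σ (F n) n) ≠ Set.univ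

/-- Player I has a winning predetermined strategy in the game `ΩFO(X)`. -/
def IPredetWinsOmegaFO (X : Type*) [TopologicalSpace X] : Prop :=
  ∃ p : ℕ → Finset X, ∀ U : ℕ → Set X,
    (∀ n, IsOpen (U n) ∧ ↑(p n) ⊆ U n) → IsOmegaCover (Set.range U)

/-- Player I has a winning (perfect-information) strategy in the game `ΩFO(X)`:
I's move in round `n` depends on II's previous moves `U 0, …, U (n-1)`. -/
def IWinsOmegaFO (X : Type*) [TopologicalSpace X] : Prop :=
  ∃ σ : List (Set X) → Finset X, ∀ U : ℕ → Set X,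
    (∀ n, IsOpen (U n) ∧ ↑(σ (hist U n)) ⊆ U n) → IsOmegaCover (Set.range U)

/-- Player II has a winning (perfect-information) strategy in the game `ΩFO(X)`:
II's move in round `n` depends on I's previous moves together with I's current move. -/
def IIWinsOmegaFO (X : Type*) [TopologicalSpace X] : Prop :=
  ∃ σ : List (Finset X) → Finset X → Set X,
    (∀ h F, IsOpen (σ h F) ∧ ↑F ⊆ σ h F) ∧
    ∀ F : ℕ → Finset X, ¬ IsOmegaCover (Set.range fun n => σ (hist F n) (F n))

/-- Player II has a winning Markov strategy in the game `ΩFO(X)`. -/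
def IIMarkovWinsOmegaFO (X : Type*) [TopologicalSpace X] : Prop :=
  ∃ σ : Finset X → ℕ → Set X,
    (∀ F n, IsOpen (σ F n) ∧ ↑F ⊆ σ F n) ∧
    ∀ F : ℕ → Finset X, ¬ IsOmegaCover (Set.range fun n => σ (F n) n)

/-- Player II has a winning tactic in the game `ΩPO(X)`: II's move depends only on
I's current move. -/
def IITacticWinsOmegaPO (X : Type*) [TopologicalSpace X] : Prop :=
  ∃ σ : X → Set X,
    (∀ x, IsOpen (σ x) ∧ x ∈ σ x) ∧
    ∀ p : ℕ → X, ¬ IsOmegaCover (Set.range fun n => σ (p n))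

/-- Player I has a winning (perfect-information) strategy in the discrete
selection game `CD(Y)`. -/
def IWinsCD (Y : Type*) [TopologicalSpace Y] : Prop :=
  ∃ σ : List Y → Set Y,
    (∀ h, IsOpen (σ h) ∧ (σ h).Nonempty) ∧
    ∀ y : ℕ → Y, (∀ n, y n ∈ σ (hist y n)) → ¬ IsClosedDiscrete (Set.range y)

/-- Player I has a winning predetermined strategy in the discrete selection game `CD(Y)`. -/
def IPredetWinsCD (Y : Type*) [TopologicalSpace Y] : Prop :=
  ∃ U : ℕ → Set Y, (∀ n, IsOpen (U n) ∧ (U n).Nonempty) ∧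
    ∀ y : ℕ → Y, (∀ n, y n ∈ U n) → ¬ IsClosedDiscrete (Set.range y)

/-- Player II has a winning (perfect-information) strategy in the discrete
selection game `CD(Y)`. -/
def IIWinsCD (Y : Type*) [TopologicalSpace Y] : Prop :=
  ∃ σ : List (Set Y) → Set Y → Y,
    ∀ U : ℕ → Set Y, (∀ n, IsOpen (U n) ∧ (U n).Nonempty) →
      (∀ n, σ (hist U n) (U n) ∈ U n) ∧
      IsClosedDiscrete (Set.range fun n => σ (hist U n) (U n))

/-- Player II has a winning Markov strategy in the discrete selection game `CD(Y)`. -/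
def IIMarkovWinsCD (Y : Type*) [TopologicalSpace Y] : Prop :=
  ∃ σ : Set Y → ℕ → Y,
    ∀ U : ℕ → Set Y, (∀ n, IsOpen (U n) ∧ (U n).Nonempty) →
      (∀ n, σ (U n) n ∈ U n) ∧
      IsClosedDiscrete (Set.range fun n => σ (U n) n)

/-- Player II has a winning (perfect-information) strategy in the closure game `CL(Y,x)`. -/
def IIWinsCL (Y : Type*) [TopologicalSpace Y] (x : Y) : Prop :=
  ∃ σ : List (Set Y) → Set Y → Y,
    ∀ U : ℕ → Set Y, (∀ n, IsOpen (U n) ∧ (U n).Nonempty) →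
      (∀ n, σ (hist U n) (U n) ∈ U n) ∧
      x ∉ closure (Set.range fun n => σ (hist U n) (U n))

/-- Player II has a winning Markov strategy in the closure game `CL(Y,x)`. -/
def IIMarkovWinsCL (Y : Type*) [TopologicalSpace Y] (x : Y) : Prop :=
  ∃ σ : Set Y → ℕ → Y,
    ∀ U : ℕ → Set Y, (∀ n, IsOpen (U n) ∧ (U n).Nonempty) →
      (∀ n, σ (U n) n ∈ U n) ∧
      x ∉ closure (Set.range fun n => σ (U n) n)

/-- Player II has a winning (perfect-information) strategy in Gruenhage's
clustering game at `x`. -/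
def IIWinsGruCluster (Y : Type*) [TopologicalSpace Y] (x : Y) : Prop :=
  ∃ σ : List (Set Y) → Set Y → Y,
    ∀ U : ℕ → Set Y, (∀ n, IsOpen (U n) ∧ x ∈ U n) →
      (∀ n, σ (hist U n) (U n) ∈ U n) ∧
      ¬ MapClusterPt x atTop (fun n => σ (hist U n) (U n))

/-- Player II has a winning Markov strategy in Gruenhage's clustering game at `x`. -/
def IIMarkovWinsGruCluster (Y : Type*) [TopologicalSpace Y] (x : Y) : Prop :=
  ∃ σ : Set Y → ℕ → Y,
    ∀ U : ℕ → Set Y, (∀ n, IsOpen (U n) ∧ x ∈ U n) →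
      (∀ n, σ (U n) n ∈ U n) ∧
      ¬ MapClusterPt x atTop (fun n => σ (U n) n)

/-- Player I has a winning predetermined strategy in Gruenhage's clustering game at `x`. -/
def IPredetWinsGruCluster (Y : Type*) [TopologicalSpace Y] (x : Y) : Prop :=
  ∃ U : ℕ → Set Y, (∀ n, IsOpen (U n) ∧ x ∈ U n) ∧
    ∀ y : ℕ → Y, (∀ n, y n ∈ U n) → MapClusterPt x atTop y

/-- Player I has a winning predetermined strategy in Gruenhage's W-game at `x`
(I wins when II's points converge to `x`). -/
def IPredetWinsGruW (Y : Type*) [TopologicalSpace Y] (x : Y) : Prop :=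
  ∃ U : ℕ → Set Y, (∀ n, IsOpen (U n) ∧ x ∈ U n) ∧
    ∀ y : ℕ → Y, (∀ n, y n ∈ U n) → Filter.Tendsto y atTop (𝓝 x)

end TopologicalGames

/-- `Cp X`: the continuous real-valued functions on `X` with the topology of
pointwise convergence (inherited from the product topology on `X → ℝ`). -/
def Cp (X : Type*) [TopologicalSpace X] : Type _ := {f : X → ℝ // Continuous f}

instance (X : Type*) [TopologicalSpace X] : TopologicalSpace (Cp X) :=
  inferInstanceAs (TopologicalSpace {f : X → ℝ // Continuous f})

/-- The constant zero function, as an element of `Cp X`. -/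
def Cp.zero (X : Type*) [TopologicalSpace X] : Cp X := ⟨fun _ => 0, continuous_const⟩

/-!
Galvin's duality turns a winning strategy of II in the Rothberger game into one of I in the
point-open game and back: by a diagonal cover, every choice function on open covers reflects all
open neighbourhoods of some point.

If I wins the point-open game, then by playing in each round the answers of the strategy to all
sublists of the history, I forces every point into all but finitely many of II's open sets.
Shrinking values on these finite sets to `0` forces II's functions in `CD(Cp(X))` to converge to
`0` pointwise, while staying different from it.

Conversely, the moves of I in `CD(Cp(X))` constrain II on finite sets only, so by complete
regularity II can answer in round `n` with a function equal to `n` off any given open neighbourhood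
of such a finite set. A point missed by all these neighbourhoods would make II's functions closed
discrete; hence I wins the finite-open game, and so also the point-open game.
-/

section Histories

variable {α β : Type*}

lemma hist_succ (a : ℕ → α) (n : ℕ) : hist a (n + 1) = hist a n ++ [a n] := by
  rw [hist, List.ofFn_succ_last]
  rfl

@[simp] lemma length_hist (a : ℕ → α) (n : ℕ) : (hist a n).length = n := by
  simp [hist]

lemma map_hist (f : α → β) (a : ℕ → α) (n : ℕ) :
    (hist a n).map f = hist (fun k => f (a k)) n :=
  List.map_ofFn ..

lemma getElem?_hist (a : ℕ → α) (n i : ℕ) :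
    (hist a n)[i]? = if i < n then some (a i) else none := by
  simp [hist, List.getElem?_ofFn]

lemma forall_mem_hist {a : ℕ → α} {p : α → Prop} (h : ∀ n, p (a n)) (n : ℕ) :
    ∀ x ∈ hist a n, p x := by
  simpa [hist, List.mem_ofFn] using fun i : Fin n => h i

lemma getD_hist (a : ℕ → α) {i n : ℕ} (hi : i < n) (d : α) : (hist a n).getD i d = a i := by
  rw [List.getD_eq_getElem?_getD, getElem?_hist, if_pos hi, Option.getD_some]

lemma hist_getD (l : List α) (d : α) : hist (fun n => l.getD n d) l.length = l :=
  List.ext_getElem (by simp) fun i _ _ => by simp [hist]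

lemma hist_comp_sublist (a : ℕ → α) {φ : ℕ → ℕ} (hφ : StrictMono φ) (n : ℕ) :
    (hist (a ∘ φ) n).Sublist (hist a (φ n)) :=
  List.sublist_of_orderEmbedding_getElem?_eq (OrderEmbedding.ofStrictMono φ hφ) fun i => by
    simp [getElem?_hist, hφ.lt_iff_lt]

/-- The history obtained from a history of another game by translating its moves one by one, where
the translation `c` of a move may depend on the translated history so far. -/
def translateHist (c : List β → α → β) : List α → List β :=
  List.foldl (fun l a => l ++ [c l a]) []

lemma exists_forall_translateHist_hist (c : List β → α → β) (a : ℕ → α) :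
    ∃ b : ℕ → β, (∀ n, translateHist c (hist a n) = hist b n) ∧ ∀ n, b n = c (hist b n) (a n) := by
  let b : ℕ → β := fun n => c (translateHist c (hist a n)) (a n)
  have hb (n : ℕ) : translateHist c (hist a n) = hist b n := by
    induction n with
    | zero => simp [translateHist, hist]
    | succ n ih =>
      rw [hist_succ b, ← ih, hist_succ]
      simp [translateHist, b]
  exact ⟨b, hb, fun n => by rw [← hb]⟩

lemma exists_forall_eq_hist (c : List α → α) : ∃ a : ℕ → α, ∀ n, a n = c (hist a n) :=
  (exists_forall_translateHist_hist (fun l (_ : Unit) => c l) fun _ => ()).imp fun _ ha => ha.2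

end Histories

section FirstWins

variable {α β α' β' : Type*}

/-- Player I has a winning strategy in the game in which I plays elements of `α`, II answers a
move `a` with some `b : β` such that `legal a b`, and I wants the play to satisfy `win`. It is a
common form for the games below, in which winning strategies can be transferred between them. -/
def FirstWins (legal : α → β → Prop) (win : (ℕ → α) → (ℕ → β) → Prop) : Prop :=
  ∃ σ : List β → α, ∀ b : ℕ → β, (∀ n, legal (σ (hist b n)) (b n)) → win (fun n => σ (hist b n)) b

/- `R n a b a' b'` couples the two plays in round `n`: first the move `a'` imitates `a`, then the
reply `b` imitates `b'`. -/
theorem FirstWins.of_simulation [Nonempty β] {legal : α → β → Prop}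
    {win : (ℕ → α) → (ℕ → β) → Prop} {legal' : α' → β' → Prop}
    {win' : (ℕ → α') → (ℕ → β') → Prop} (H : FirstWins legal win)
    (R : ℕ → α → β → α' → β' → Prop)
    (sim : ∀ n a, ∃ a', ∀ b', legal' a' b' → ∃ b, legal a b ∧ R n a b a' b')
    (win_of_win : ∀ a b a' b', (∀ n, R n (a n) (b n) (a' n) (b' n)) → win a b → win' a' b') :
    FirstWins legal' win' := by
  obtain ⟨σ, hσ⟩ := H
  choose move hmove using sim
  choose! reply hlegal hR using hmove
  let past : List β' → List β := translateHist fun l => reply l.length (σ l)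
  refine ⟨fun l => move l.length (σ (past l)), fun b' hb' => ?_⟩
  obtain ⟨b, hpast, hb⟩ := exists_forall_translateHist_hist (fun l => reply l.length (σ l)) b'
  simp only [length_hist, past, hpast] at hb hb' ⊢
  refine win_of_win (fun n => σ (hist b n)) b _ b' (fun n => ?_) (hσ b fun n => ?_)
  · rw [hb n]
    exact hR n _ _ (hb' n)
  · rw [hb n]
    exact hlegal n _ _ (hb' n)

end FirstWins

section SelectionGames

variable {M : Type*} {A B : Set (Set M)}

lemma iiWinsG1_iff_firstWins :
    IIWinsG1 A B ↔
      FirstWins (fun (_ : {φ : Set M → M // ∀ a ∈ A, φ a ∈ a}) a => a ∈ A)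
        (fun φ a => range (fun n => (φ n).1 (a n)) ∈ B) := by
  refine ⟨fun ⟨σ, hσ⟩ => ?_, fun ⟨σ, hσ⟩ =>
    ⟨fun l => (σ l).1, fun a ha => ⟨fun n => (σ _).2 _ (ha n), hσ a ha⟩⟩⟩
  have choice_of_legal (l : List (Set M)) (hl : ∀ a ∈ l, a ∈ A) : ∀ a ∈ A, σ l a ∈ a := by
    intro a ha
    have hplay (n : ℕ) : l.getD n a ∈ A := by
      rcases lt_or_ge n l.length with hn | hn
      · simpa [hn] using hl _ (List.getElem_mem hn)
      · simpa [hn] using ha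
    simpa only [hist_getD, List.getD_eq_default l a le_rfl] using (hσ _ hplay).1 l.length
  have legalize (l : List (Set M)) :
      ∃ φ : {φ : Set M → M // ∀ a ∈ A, φ a ∈ a}, (∀ a ∈ l, a ∈ A) → φ.1 = σ l := by
    by_cases hl : ∀ a ∈ l, a ∈ A
    · exact ⟨⟨σ l, choice_of_legal l hl⟩, fun _ => rfl⟩
    · exact ⟨⟨σ [], choice_of_legal [] (by simp)⟩, fun hl' => absurd hl' hl⟩
  choose τ hτ using legalize
  refine ⟨τ, fun a ha => ?_⟩
  simpa only [hτ _ (forall_mem_hist ha _)] using (hσ a ha).2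

end SelectionGames

lemma exists_forall_frequently_eq (γ : Type*) [Nonempty γ] [Countable γ] :
    ∃ e : ℕ → γ, ∀ c, ∃ᶠ n in atTop, e n = c := by
  obtain ⟨f, hf⟩ := exists_surjective_nat γ
  refine ⟨fun n => f n.unpair.1, fun c => frequently_atTop.2 fun N => ?_⟩
  obtain ⟨k, rfl⟩ := hf c
  exact ⟨Nat.pair k N, Nat.right_le_pair k N, by simp⟩

section UnionHist

variable {X : Type*}

/-- The history in the finite-open game described by `c`: in each round the answer of II is the
union of the sets `U i`, where `i` runs through the corresponding entry of `c`. -/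
def unionHist (U : ℕ → Set X) (c : List (Finset ℕ)) : List (Set X) :=
  c.map fun I => ⋃ i ∈ I, U i

lemma eventually_unionHist_getD_hist (U : ℕ → Set X) (c : List (Finset ℕ)) :
    ∀ᶠ n in atTop, unionHist (fun i => (hist U n).getD i ∅) c = unionHist U c := by
  have hlt : ∀ᶠ n in atTop, ∀ I ∈ c, ∀ i ∈ I, i < n :=
    (eventually_all_finite (List.finite_toSet c)).2 fun I _ =>
      (eventually_all_finset I).2 fun i _ => eventually_gt_atTop i
  filter_upwards [hlt] with n hn
  exact List.map_congr_left fun I hI => iUnion₂_congr fun i hi => getD_hist U (hn I hI i hi) ∅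

end UnionHist

section CoveringGames

variable {X : Type*} [TopologicalSpace X]

/-- Player I has a winning strategy in the point-open game `PO(X)`. -/
def IWinsPO (X : Type*) [TopologicalSpace X] : Prop :=
  FirstWins (fun (x : X) U => IsOpen U ∧ x ∈ U) (fun _ U => ⋃ n, U n = univ)

/-- Player I has a winning strategy in the finite-open game `FO(X)`. -/
def IWinsFO (X : Type*) [TopologicalSpace X] : Prop :=
  FirstWins (fun (F : Finset X) (U : Set X) => IsOpen U ∧ ↑F ⊆ U) (fun _ U => ⋃ n, U n = univ)

/-- Player I has a winning strategy in the finite-open game in which I wins a play if every point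
belongs to all but finitely many of the sets played by II, that is, if these form a γ-cover. -/
def IWinsGammaFO (X : Type*) [TopologicalSpace X] : Prop :=
  FirstWins (fun (F : Finset X) (U : Set X) => IsOpen U ∧ ↑F ⊆ U)
    (fun _ U => ∀ x, ∀ᶠ n in atTop, x ∈ U n)

lemma IWinsPO.nonempty (H : IWinsPO X) : Nonempty X :=
  ⟨H.choose []⟩

lemma exists_forall_isOpen_exists_isOpenCover_eq {φ : Set (Set X) → Set X}
    (hφ : ∀ 𝒰, IsOpenCover 𝒰 → φ 𝒰 ∈ 𝒰) :
    ∃ x, ∀ U, IsOpen U ∧ x ∈ U → ∃ 𝒰, IsOpenCover 𝒰 ∧ φ 𝒰 = U := by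
  by_contra! H
  choose U hU hne using H
  have hcover : IsOpenCover (range U) :=
    ⟨forall_mem_range.2 fun x => (hU x).1,
      eq_univ_of_forall fun x => ⟨U x, mem_range_self x, (hU x).2⟩⟩
  obtain ⟨x, hx⟩ := hφ _ hcover
  exact hne x _ hcover hx.symm

lemma IsOpenCover.exists_mem {𝒰 : Set (Set X)} (h𝒰 : IsOpenCover 𝒰) (x : X) : ∃ U ∈ 𝒰, x ∈ U :=
  mem_sUnion.1 (h𝒰.2 ▸ mem_univ x)

theorem iiWinsG1_isOpenCover_iff_iWinsPO :
    IIWinsG1 {𝒰 : Set (Set X) | IsOpenCover 𝒰} {𝒰 : Set (Set X) | IsOpenCover 𝒰} ↔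
      IWinsPO X := by
  rw [iiWinsG1_iff_firstWins]
  constructor
  · intro H
    refine H.of_simulation (fun _ φ 𝒰 _ U => φ.1 𝒰 = U)
      (fun _ φ => exists_forall_isOpen_exists_isOpenCover_eq φ.2) fun φ 𝒰 _ U hU h => ?_
    simpa [hU, sUnion_range] using h.2
  · intro H
    refine H.of_simulation (fun _ _ U φ 𝒰 => φ.1 𝒰 = U ∧ IsOpen U) (fun _ x => ?_)
      fun _ U φ 𝒰 hU h => ?_
    · choose! φ hφ hx using fun (𝒰 : Set (Set X)) (h𝒰 : IsOpenCover 𝒰) => h𝒰.exists_mem x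
      exact ⟨⟨φ, hφ⟩, fun 𝒰 h𝒰 =>
        have hopen : IsOpen (φ 𝒰) := h𝒰.1 _ (hφ 𝒰 h𝒰)
        ⟨φ 𝒰, ⟨hopen, hx 𝒰 h𝒰⟩, rfl, hopen⟩⟩
    · simpa [IsOpenCover, sUnion_range, fun n => (hU n).1, fun n => (hU n).2] using h

theorem IWinsPO.iWinsGammaFO (H : IWinsPO X) : IWinsGammaFO X := by
  classical
  obtain ⟨σ, hσ⟩ := H
  refine ⟨fun l => (l.sublists.map σ).toFinset, fun U hU x => ?_⟩
  have hsub {l : List (Set X)} {n : ℕ} (hl : l.Sublist (hist U n)) : σ l ∈ U n :=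
    (hU n).2 (by simpa using ⟨l, hl, rfl⟩)
  by_contra hx
  obtain ⟨φ, hφ, hxφ⟩ := extraction_of_frequently_atTop (not_eventually.1 hx)
  have hcover : ⋃ n, U (φ n) = univ :=
    hσ (U ∘ φ) fun n => ⟨(hU _).1, hsub (hist_comp_sublist U hφ n)⟩
  obtain ⟨n, hn⟩ := iUnion_eq_univ_iff.1 hcover x
  exact hxφ n hn

lemma iUnion_eq_univ_of_forall_subset_iUnion {σ : List (Set X) → Finset X}
    (hσ : ∀ V : ℕ → Set X, (∀ n, IsOpen (V n) ∧ ↑(σ (hist V n)) ⊆ V n) → ⋃ n, V n = univ)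
    {U : ℕ → Set X} (hU : ∀ n, IsOpen (U n)) (hsub : ∀ c, ↑(σ (unionHist U c)) ⊆ ⋃ n, U n) :
    ⋃ n, U n = univ := by
  have hfin (c : List (Finset ℕ)) : ∃ I : Finset ℕ, ↑(σ (unionHist U c)) ⊆ ⋃ i ∈ I, U i := by
    obtain ⟨I, hI, hIU⟩ := finite_subset_iUnion (Finset.finite_toSet _) (hsub c)
    exact ⟨hI.toFinset, by simpa using hIU⟩
  choose next hnext using hfin
  obtain ⟨I, hI⟩ := exists_forall_eq_hist next
  have hcover : ⋃ k, ⋃ i ∈ I k, U i = univ := by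
    refine hσ _ fun k => ⟨isOpen_biUnion fun i _ => hU i, ?_⟩
    rw [← map_hist (fun J : Finset ℕ => ⋃ i ∈ J, U i), hI k]
    exact hnext _
  exact univ_subset_iff.1 (hcover ▸ iUnion_subset fun k => iUnion₂_subset fun i _ =>
    subset_iUnion U i)

/- In place of a finite set, I plays its points one at a time. Instead of completing one round of
the finite-open game before starting the next, I visits each point of each move at each position
`unionHist U c` infinitely often, in particular once `c` only refers to sets already played. -/
theorem IWinsFO.iWinsPO [Nonempty X] (H : IWinsFO X) : IWinsPO X := by
  obtain ⟨σ, hσ⟩ := H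
  choose point hpoint using fun l => countable_iff_exists_subset_range.1 (σ l).countable_toSet
  obtain ⟨e, he⟩ := exists_forall_frequently_eq (List (Finset ℕ) × ℕ)
  refine ⟨fun h => point (unionHist (fun i => h.getD i ∅) (e h.length).1) (e h.length).2,
    fun U hU => iUnion_eq_univ_of_forall_subset_iUnion hσ (fun n => (hU n).1) fun c x hx => ?_⟩
  obtain ⟨j, rfl⟩ := hpoint _ hx
  obtain ⟨n, hn, hpast⟩ := ((he (c, j)).and_eventually (eventually_unionHist_getD_hist U c)).exists
  have hmem := (hU n).2
  beta_reduce at hmem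
  rw [length_hist, hn, hpast] at hmem
  exact mem_iUnion_of_mem n hmem

end CoveringGames

lemma exists_continuous_eqOn_zero_eqOn_one_compl {X : Type*} [TopologicalSpace X]
    [CompletelyRegularSpace X] (F : Finset X) {U : Set X} (hU : IsOpen U) (hF : ↑F ⊆ U) :
    ∃ h : X → ℝ, Continuous h ∧ EqOn h 0 F ∧ EqOn h 1 Uᶜ := by
  have hpoint (p : F) : ∃ f : X → unitInterval, Continuous f ∧ f p = 0 ∧ EqOn f 1 Uᶜ :=
    CompletelyRegularSpace.completely_regular p.1 Uᶜ hU.isClosed_compl (by simpa using hF p.2)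
  choose f hf hf₀ hf₁ using hpoint
  refine ⟨fun x => ∏ p, (f p x : ℝ),
    continuous_finsetProd _ fun p _ => continuous_subtype_val.comp (hf p), fun x hx => ?_,
    fun x hx => ?_⟩
  · exact Finset.prod_eq_zero (Finset.mem_univ ⟨x, hx⟩) (by simp [hf₀])
  · exact Finset.prod_eq_one fun p _ => by simp [hf₁ p hx]

lemma isClosedDiscrete_range_of_isClosedEmbedding_comp {ι Y Z : Type*} [TopologicalSpace ι]
    [DiscreteTopology ι] [TopologicalSpace Y] [T2Space Y] [TopologicalSpace Z] {f : Y → Z}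
    (hf : Continuous f) {y : ι → Y} (hfy : IsClosedEmbedding (f ∘ y)) :
    IsClosedDiscrete (range y) := by
  have hy : Continuous y := continuous_of_discreteTopology
  exact ⟨(isProperMap_of_comp_of_t2 hy hf hfy.isProperMap).isClosedMap.isClosed_range,
    isDiscrete_iff_forall_mem_exists_isOpen.1
      (hfy.isEmbedding.of_comp hy hf).isInducing.isDiscrete_range⟩

lemma iWinsCD_iff_firstWins {Y : Type*} [TopologicalSpace Y] :
    IWinsCD Y ↔ FirstWins (fun (W : {W : Set Y // IsOpen W ∧ W.Nonempty}) y => y ∈ W.1)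
      (fun _ y => ¬ IsClosedDiscrete (range y)) :=
  ⟨fun ⟨σ, hlegal, hσ⟩ => ⟨fun l => ⟨σ l, hlegal l⟩, hσ⟩,
    fun ⟨σ, hσ⟩ => ⟨fun l => (σ l).1, fun l => (σ l).2, hσ⟩⟩

lemma IWinsCD.nontrivial {Y : Type*} [TopologicalSpace Y] (H : IWinsCD Y) : Nontrivial Y := by
  obtain ⟨σ, hlegal, hσ⟩ := H
  by_contra hY
  rw [not_nontrivial_iff_subsingleton] at hY
  obtain ⟨y, -⟩ := (hlegal []).2
  refine hσ (fun _ => y) (fun n => ?_)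
    ⟨isClosed_discrete _, fun x hx => ⟨{x}, isOpen_discrete _, ?_⟩⟩
  · simp [Subsingleton.eq_univ_of_nonempty (hlegal _).2]
  · simpa using hx

namespace Cp

variable {X : Type*} [TopologicalSpace X]

instance : T2Space (Cp X) := inferInstanceAs (T2Space {f : X → ℝ // Continuous f})

instance : Nonempty (Cp X) := ⟨zero X⟩

lemma continuous_eval (x : X) : Continuous fun f : Cp X => f.1 x :=
  (continuous_apply x).comp continuous_subtype_val

lemma tendsto_iff {ι : Type*} {l : Filter ι} {y : ι → Cp X} {f : Cp X} :
    Tendsto y l (𝓝 f) ↔ ∀ x, Tendsto (fun n => (y n).1 x) l (𝓝 (f.1 x)) :=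
  tendsto_subtype_rng.trans tendsto_pi_nhds

lemma isClosedDiscrete_range {y : ℕ → Cp X} {x : X} (hy : ∀ n, (y n).1 x = n) :
    IsClosedDiscrete (range y) := by
  refine isClosedDiscrete_range_of_isClosedEmbedding_comp (continuous_eval x) ?_
  simpa only [Function.comp_def, hy] using Nat.isClosedEmbedding_coe_real

lemma exists_finset_forall_eqOn_mem {W : Set (Cp X)} (hW : IsOpen W) {f : Cp X} (hf : f ∈ W) :
    ∃ F : Finset X, ∀ g : Cp X, EqOn g.1 f.1 F → g ∈ W := by
  obtain ⟨O, hO, rfl⟩ := isOpen_induced_iff.1 hW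
  obtain ⟨F, v, hv, hF⟩ := isOpen_pi_iff.1 hO f.1 hf
  exact ⟨F, fun g hg => hF fun x hx => hg hx ▸ (hv x hx).2⟩

lemma exists_finset_forall_isOpen_exists_mem_eq_const [CompletelyRegularSpace X]
    {W : Set (Cp X)} (hW : IsOpen W) (hne : W.Nonempty) (c : ℝ) :
    ∃ F : Finset X, ∀ U : Set X, IsOpen U ∧ ↑F ⊆ U → ∃ g ∈ W, ∀ x ∉ U, g.1 x = c := by
  obtain ⟨f, hf⟩ := hne
  obtain ⟨F, hF⟩ := exists_finset_forall_eqOn_mem hW hf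
  refine ⟨F, fun U ⟨hU, hFU⟩ => ?_⟩
  obtain ⟨h, hc, h₀, h₁⟩ := exists_continuous_eqOn_zero_eqOn_one_compl F hU hFU
  exact ⟨⟨fun x => f.1 x + h x * (c - f.1 x), f.2.add (hc.mul (continuous_const.sub f.2))⟩,
    hF _ fun x hx => by simp [h₀ hx], fun x hx => by simp [h₁ hx]⟩

lemma isOpen_setOf_forall_abs_lt (F : Finset X) (ε : ℝ) :
    IsOpen {f : Cp X | ∀ x ∈ F, |f.1 x| < ε} := by
  simp only [ofPred_forall]
  exact isOpen_biInter_finset fun x _ => isOpen_lt (continuous_eval x).abs continuous_const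

lemma exists_ne_zero_forall_abs_lt [Nonempty X] {ε : ℝ} (hε : 0 < ε) :
    ∃ f : Cp X, f ≠ zero X ∧ ∀ x, |f.1 x| < ε := by
  refine ⟨⟨fun _ => ε / 2, continuous_const⟩, fun h => ?_, fun _ => ?_⟩
  · obtain ⟨x⟩ := ‹Nonempty X›
    exact (half_pos hε).ne' (congrFun (congrArg Subtype.val h) x)
  · exact (abs_of_pos (half_pos hε)).trans_lt (half_lt_self hε)

end Cp

section DiscreteSelection

variable {X : Type*} [TopologicalSpace X]

lemma IWinsCD.nonempty (H : IWinsCD (Cp X)) : Nonempty X := by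
  obtain ⟨f, g, hfg⟩ := H.nontrivial
  by_contra hX
  exact hfg (Subtype.ext (funext fun x => (hX ⟨x⟩).elim))

theorem IWinsCD.iWinsFO [CompletelyRegularSpace X] (H : IWinsCD (Cp X)) : IWinsFO X := by
  refine (iWinsCD_iff_firstWins.1 H).of_simulation (fun n _ g _ U => ∀ x ∉ U, g.1 x = n)
    (fun n W => Cp.exists_finset_forall_isOpen_exists_mem_eq_const W.2.1 W.2.2 n)
    fun _ g _ U hgU hg => ?_
  refine iUnion_eq_univ_iff.2 fun x => ?_
  by_contra! hx
  exact hg (Cp.isClosedDiscrete_range fun n => hgU n x (hx n))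

theorem IWinsGammaFO.iWinsCD [Nonempty X] (H : IWinsGammaFO X) : IWinsCD (Cp X) := by
  refine iWinsCD_iff_firstWins.2 (H.of_simulation
    (fun n _ U _ f => f ≠ Cp.zero X ∧ U = {x | |f.1 x| < 1 / ((n : ℝ) + 1)}) (fun n F => ?_)
    fun _ U _ f hU h hf => ?_)
  · let ε : ℝ := 1 / ((n : ℝ) + 1)
    have hε : 0 < ε := Nat.one_div_pos_of_nat
    let W : Set (Cp X) := {f | ∀ x ∈ F, |f.1 x| < ε} ∩ {Cp.zero X}ᶜ
    have hW : IsOpen W := (Cp.isOpen_setOf_forall_abs_lt F ε).inter isOpen_compl_singleton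
    have hne : W.Nonempty := by
      obtain ⟨f, hf₀, hf⟩ := Cp.exists_ne_zero_forall_abs_lt (X := X) hε
      exact ⟨f, fun x _ => hf x, hf₀⟩
    exact ⟨⟨W, hW, hne⟩, fun f ⟨hfF, hf₀⟩ => ⟨{x | |f.1 x| < ε},
      ⟨isOpen_lt f.2.abs continuous_const, hfF⟩, hf₀, rfl⟩⟩
  · have hlim : Tendsto f atTop (𝓝 (Cp.zero X)) := Cp.tendsto_iff.2 fun x =>
      squeeze_zero_norm' ((h x).mono fun n hn => by
        rw [(hU n).2] at hn
        exact hn.le) tendsto_one_div_add_atTop_nhds_zero_nat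
    obtain ⟨n, hn⟩ := hf.1.mem_of_tendsto hlim (Eventually.of_forall mem_range_self)
    exact (hU n).1 hn

end DiscreteSelection

theorem II_wins_rothberger_iff_I_wins_CD_Cp_general
    (X : Type*) [TopologicalSpace X] [CompletelyRegularSpace X] :
    IIWinsG1 {𝒰 : Set (Set X) | IsOpenCover 𝒰} {𝒰 : Set (Set X) | IsOpenCover 𝒰} ↔
      IWinsCD (Cp X) := by
  rw [iiWinsG1_isOpenCover_iff_iWinsPO]
  constructor
  · intro H
    have : Nonempty X := H.nonempty
    exact H.iWinsGammaFO.iWinsCD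
  · intro H
    have : Nonempty X := H.nonempty
    exact H.iWinsFO.iWinsPO

/-- For a T3.5 space `X`, II has a winning strategy in the Rothberger
game `G1(O_X, O_X)` on `X` iff I has a winning strategy in the discrete selection
game `CD(Cp(X))`. -/
theorem II_wins_rothberger_iff_I_wins_CD_Cp
    (X : Type*) [TopologicalSpace X] [T35Space X] :
    IIWinsG1 {𝒰 : Set (Set X) | IsOpenCover 𝒰} {𝒰 : Set (Set X) | IsOpenCover 𝒰} ↔
      IWinsCD (Cp X) := by
  exact II_wins_rothberger_iff_I_wins_CD_Cp_general X
end

section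
/- Let X be a topological space. Player II has a winning Markov strategy in the point-open game PO(X) if and only if player I has a winning predetermined strategy in the Rothberger game G1(O_X,O_X). -/
open Set Filter Topology

/-! Fix for each point a set of legal replies. A Markov strategy of II is, round by round, a choice
of one reply for every point, and the range of such a choice is a legal move of I in the selection
game; conversely, choosing for every point a legal reply inside I's predetermined move gives back a
Markov strategy. Under this exchange the points played by I index the selections made by II, so
both games produce the same sequences of replies. For the point-open game the replies to a point
are its open neighborhoods, and the ranges of choices are open covers. -/

section Duality

variable {ι M : Type*}

/-- The indexed family `N` is a reflection of `A` (in the sense of Clontz's dual selection games):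
the ranges of choice functions for `N` belong to `A`, and every member of `A` contains such a range.
The second condition is stated without choosing the function. -/
structure IsReflection (N : ι → Set M) (A : Set (Set M)) : Prop where
  range_mem : ∀ f : ι → M, (∀ i, f i ∈ N i) → range f ∈ A
  inter_nonempty : ∀ a ∈ A, ∀ i, (N i ∩ a).Nonempty

/-- Player II has a winning Markov strategy in the game where, in each round, I plays an index `i`
and II replies with an element of `N i`; II wins if the set of replies is not in `B`. When `N`
reflects `A`, this game is dual to `G1(A,B)`. Player I plays indices rather than the sets `N i`, so
that II may answer differently to distinct indices with equal reply sets. -/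
def IIMarkovWinsDual (N : ι → Set M) (B : Set (Set M)) : Prop :=
  ∃ σ : ι → ℕ → M, (∀ i n, σ i n ∈ N i) ∧ ∀ p : ℕ → ι, range (fun n => σ (p n) n) ∉ B

theorem IsReflection.iiMarkovWinsDual_iff {N : ι → Set M} {A : Set (Set M)}
    (hN : IsReflection N A) (B : Set (Set M)) : IIMarkovWinsDual N B ↔ IPredetWinsG1 A B := by
  constructor
  · rintro ⟨σ, hσ, hwin⟩
    refine ⟨fun n => range (σ · n), fun n => hN.range_mem _ (hσ · n), fun b hb => ?_⟩
    choose p hp using hb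
    simpa only [hp] using hwin p
  · rintro ⟨a, ha, hwin⟩
    choose σ hσN hσa using fun i n => hN.inter_nonempty (a n) (ha n) i
    exact ⟨σ, hσN, fun p => hwin _ fun n => hσa (p n) n⟩

end Duality

section PointOpen

variable {X : Type*} [TopologicalSpace X]

/-- The open neighborhoods of `x`, which are II's legal replies to `x` in the point-open game. -/
def openNhds (x : X) : Set (Set X) := {U | IsOpen U ∧ x ∈ U}

theorem isOpenCover_range_iff {ι : Type*} {U : ι → Set X} (hU : ∀ i, IsOpen (U i)) :
    IsOpenCover (range U) ↔ ⋃ i, U i = univ := by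
  rw [IsOpenCover, forall_mem_range, sUnion_range]
  exact and_iff_right hU

theorem isReflection_openNhds :
    IsReflection (openNhds (X := X)) {𝒰 : Set (Set X) | IsOpenCover 𝒰} where
  range_mem f hf :=
    (isOpenCover_range_iff fun x => (hf x).1).2 (iUnion_eq_univ_iff.2 fun x => ⟨x, (hf x).2⟩)
  inter_nonempty 𝒰 h𝒰 x := by
    obtain ⟨U, hU, hxU⟩ := sUnion_eq_univ_iff.1 h𝒰.2 x
    exact ⟨U, ⟨h𝒰.1 U hU, hxU⟩, hU⟩

theorem iiMarkovWinsPO_iff_iiMarkovWinsDual :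
    IIMarkovWinsPO X ↔
      IIMarkovWinsDual (openNhds (X := X)) {𝒰 : Set (Set X) | IsOpenCover 𝒰} :=
  exists_congr fun _ => and_congr_right fun hσ =>
    forall_congr' fun p => not_congr (isOpenCover_range_iff fun n => (hσ (p n) n).1).symm

end PointOpen

/-- For a topological space `X`, II has a winning Markov strategy in the
point-open game `PO(X)` iff I has a winning predetermined strategy in the Rothberger
game `G1(O_X, O_X)`. -/
theorem II_markov_wins_PO_iff_I_predet_wins_rothberger
    (X : Type*) [TopologicalSpace X] :
    IIMarkovWinsPO X ↔
      IPredetWinsG1 {𝒰 : Set (Set X) | IsOpenCover 𝒰} {𝒰 : Set (Set X) | IsOpenCover 𝒰} := by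
  rw [iiMarkovWinsPO_iff_iiMarkovWinsDual, isReflection_openNhds.iiMarkovWinsDual_iff]
end
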